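/- For integers a, b with a > b + 1 and b ∈ {2, 3}, the MV assignment M^a V^b on the 1×(a+b+1) strip of stamps satisfies c(M^a V^b) = ab + b² − b + 1. -/

import Mathlib

/-- A crease direction: mountain or valley. -/
inductive MV : Type
  | M : MV
  | V : MV
deriving DecidableEq

/-- The value `σ(i)` of a layer ordering at face `i`, as a natural number
(`0` if `i` is out of range). -/
def faceVal {n : ℕ} (σ : Equiv.Perm (Fin n)) (i : ℕ) : ℕ :=
  if h : i < n then (σ ⟨i, h⟩ : Fin n) else 0

/-- Condition (1): the layer ordering respects the mountain–valley assignment. -/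
def MVRelations (n : ℕ) (μ : ℕ → MV) (σ : Equiv.Perm (Fin n)) : Prop :=
  ∀ i, i + 1 < n →
    if (μ i = MV.M ∧ Even i) ∨ (μ i = MV.V ∧ Odd i)
    then faceVal σ (i + 1) < faceVal σ i
    else faceVal σ i < faceVal σ (i + 1)

/-- `x` lies strictly between `lo` and `hi` (in either order). -/
def StrictlyBetween (x a b : ℕ) : Prop := min a b < x ∧ x < max a b

/-- Condition (2): no two creases on the same side cross. -/
def NoCrossings (n : ℕ) (σ : Equiv.Perm (Fin n)) : Prop :=
  ∀ i j, i + 1 < n → j + 1 < n → i % 2 = j % 2 →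
    ¬ Xor' (StrictlyBetween (faceVal σ j) (faceVal σ i) (faceVal σ (i + 1)))
           (StrictlyBetween (faceVal σ (j + 1)) (faceVal σ i) (faceVal σ (i + 1)))

/-- A valid layer ordering for the MV assignment `μ` on the `1 × n` strip. -/
def ValidLayerOrdering (n : ℕ) (μ : ℕ → MV) (σ : Equiv.Perm (Fin n)) : Prop :=
  MVRelations n μ σ ∧ NoCrossings n σ

/-- `c(μ)`: the number of valid layer orderings for `μ` on the `1 × n` strip. -/
noncomputable def foldCount (n : ℕ) (μ : ℕ → MV) : ℕ :=
  Nat.card {σ : Equiv.Perm (Fin n) // ValidLayerOrdering n μ σ}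

/-! Along its mountain creases the strip winds up as a spiral, and at face 2 the spiral turns
either inwards or outwards. If it turns inwards, then every later face up to face `2a - 1` is
trapped inside the first crease; if it turns outwards, then no later face up to face `2a - 3`
enters the first crease. Hence, when `a ≥ b + 2`, the foldings of `M^(a+1) V^b` arise from those
of `M^a V^b`, turned over, by adding a first face either right next to the old one, which is
always possible, or around the whole stack, which is possible exactly when the old spiral turns
inwards. So `c(M^a V^b)` grows with `a` by the constant number of inward foldings, and an
enumeration of the case `a = b + 2` finishes the proof. -/

open Equiv (Perm)

section FaceVal

variable {n : ℕ}

theorem faceVal_of_lt (σ : Perm (Fin n)) {i : ℕ} (hi : i < n) : faceVal σ i = σ ⟨i, hi⟩ :=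
  dif_pos hi

theorem faceVal_lt (σ : Perm (Fin n)) {i : ℕ} (hi : i < n) : faceVal σ i < n := by
  rw [faceVal_of_lt σ hi]
  exact (σ ⟨i, hi⟩).isLt

theorem faceVal_ne (σ : Perm (Fin n)) {i j : ℕ} (hi : i < n) (hj : j < n) (hij : i ≠ j) :
    faceVal σ i ≠ faceVal σ j := by
  simpa [faceVal_of_lt, hi, hj, Fin.val_inj] using hij

theorem exists_faceVal_eq (σ : Perm (Fin n)) {v : ℕ} (hv : v < n) : ∃ i < n, faceVal σ i = v :=
  ⟨σ.symm ⟨v, hv⟩, Fin.isLt _, by simp [faceVal]⟩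

theorem faceVal_zero_add_one_of_forall_le {σ : Perm (Fin n)} (hn : 0 < n)
    (h : ∀ i < n, faceVal σ i ≤ faceVal σ 0) : faceVal σ 0 + 1 = n := by
  obtain ⟨i, hi, hiv⟩ := exists_faceVal_eq σ (Nat.sub_one_lt_of_lt hn)
  have hlt := faceVal_lt σ hn
  have hle := h i hi
  omega

end FaceVal

section FirstFace

variable {n : ℕ} {μ : ℕ → MV}

/-- The `i`-th instance of condition (1), for arbitrary layers `f`. -/
def CreaseRel (μ : ℕ → MV) (f : ℕ → ℕ) (i : ℕ) : Prop :=
  if (μ i = MV.M ∧ Even i) ∨ (μ i = MV.V ∧ Odd i) then f (i + 1) < f i else f i < f (i + 1)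

/-- The instance of condition (2) at the creases `(i, i+1)` and `(j, j+1)`, for arbitrary
layers `f`. -/
def NoncrossingAt (f : ℕ → ℕ) (i j : ℕ) : Prop :=
  StrictlyBetween (f j) (f i) (f (i + 1)) ↔ StrictlyBetween (f (j + 1)) (f i) (f (i + 1))

/-- The instances of conditions (1) and (2) on a strip of `n + 1` faces that involve its first
crease: what has to be checked when a first face is added to a folding of `n` faces. -/
def FirstFaceFits (n : ℕ) (μ : ℕ → MV) (f : ℕ → ℕ) : Prop :=
  (0 < n → CreaseRel μ f 0) ∧
    ∀ j < n, j % 2 = 0 → NoncrossingAt f 0 j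

theorem validLayerOrdering_iff {σ : Perm (Fin n)} :
    ValidLayerOrdering n μ σ ↔ (∀ i, i + 1 < n → CreaseRel μ (faceVal σ) i) ∧
      ∀ i j, i + 1 < n → j + 1 < n → i % 2 = j % 2 → NoncrossingAt (faceVal σ) i j :=
  and_congr Iff.rfl <| forall₅_congr fun _ _ _ _ _ => not_xor _ _

theorem noncrossingAt_comm (σ : Perm (Fin n)) {i j : ℕ} (hi : i + 1 < n) (hj : j + 1 < n)
    (hij : i % 2 = j % 2) : NoncrossingAt (faceVal σ) i j ↔ NoncrossingAt (faceVal σ) j i := by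
  obtain rfl | hne := eq_or_ne i j
  · rfl
  have hii := faceVal_ne σ (i := i) (j := i + 1) (by omega) hi (by omega)
  have hjj := faceVal_ne σ (i := j) (j := j + 1) (by omega) hj (by omega)
  have h00 := faceVal_ne σ (i := i) (j := j) (by omega) (by omega) hne
  have h01 := faceVal_ne σ (i := i) (j := j + 1) (by omega) hj (by omega)
  have h10 := faceVal_ne σ (i := i + 1) (j := j) hi (by omega) (by omega)
  have h11 := faceVal_ne σ (i := i + 1) (j := j + 1) hi hj (by omega)
  simp only [NoncrossingAt, StrictlyBetween]
  omega

theorem creaseRel_succ_iff {f g : ℕ → ℕ} {i : ℕ} (h : f (i + 1) < f (i + 2) ↔ g (i + 1) < g i)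
    (h' : f (i + 2) < f (i + 1) ↔ g i < g (i + 1)) :
    CreaseRel μ f (i + 1) ↔ CreaseRel (fun k => μ (k + 1)) g i := by
  rcases hμ : μ (i + 1) <;> by_cases hi : Even i <;>
    simp [CreaseRel, hμ, hi, Nat.even_add_one, Nat.odd_add_one, ← Nat.not_even_iff_odd, h, h']

theorem noncrossingAt_succ_iff {f g : ℕ → ℕ}
    (hfg : ∀ i < n, ∀ j < n, f (i + 1) < f (j + 1) ↔ g j < g i) {i j : ℕ} (hi : i + 1 < n)
    (hj : j + 1 < n) : NoncrossingAt f (i + 1) (j + 1) ↔ NoncrossingAt g i j := by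
  have between_iff (k : ℕ) (hk : k < n) :
      StrictlyBetween (f (k + 1)) (f (i + 1)) (f (i + 1 + 1)) ↔
        StrictlyBetween (g k) (g i) (g (i + 1)) := by
    simp only [StrictlyBetween, min_lt_iff, lt_max_iff, hfg _ hk, hfg _ (Nat.lt_of_succ_lt hi),
      hfg _ hi, hk, hi, Nat.lt_of_succ_lt hi]
    exact and_comm
  rw [NoncrossingAt, NoncrossingAt, between_iff j (by omega), between_iff (j + 1) hj]

theorem validLayerOrdering_succ_iff {σ : Perm (Fin (n + 1))} {τ : Perm (Fin n)}
    (hστ : ∀ i < n, ∀ j < n, faceVal σ (i + 1) < faceVal σ (j + 1) ↔ faceVal τ j < faceVal τ i) :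
    ValidLayerOrdering (n + 1) μ σ ↔
      FirstFaceFits n μ (faceVal σ) ∧ ValidLayerOrdering n (fun i => μ (i + 1)) τ := by
  have rel_iff (i : ℕ) (hi : i + 1 < n) := creaseRel_succ_iff (μ := μ)
    (hστ i (by omega) (i + 1) hi) (hστ (i + 1) hi i (by omega))
  have nc_iff (i j : ℕ) := noncrossingAt_succ_iff hστ (i := i) (j := j)
  rw [validLayerOrdering_iff, validLayerOrdering_iff]
  constructor
  · rintro ⟨hrel, hnc⟩
    refine ⟨⟨fun hn => hrel 0 (by omega), fun j hj hj2 => ?_⟩, fun i hi => ?_,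
      fun i j hi hj hij => ?_⟩
    · exact hnc 0 j (by omega) (by omega) hj2.symm
    · exact (rel_iff i hi).1 (hrel (i + 1) (by omega))
    · exact (nc_iff i j hi hj).1 (hnc (i + 1) (j + 1) (by omega) (by omega) (by omega))
  · rintro ⟨⟨hrel₀, hnc₀⟩, hrel, hnc⟩
    constructor
    · rintro (_ | i) hi
      · exact hrel₀ (by omega)
      · exact (rel_iff i (by omega)).2 (hrel i (by omega))
    · rintro (_ | i) (_ | j) hi hj hij
      · exact hnc₀ 0 (by omega) rfl
      · exact hnc₀ (j + 1) (by omega) hij.symm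
      · exact (noncrossingAt_comm σ hi hj hij).2 (hnc₀ (i + 1) (by omega) hij)
      · exact (nc_iff i j (by omega) (by omega)).2 (hnc i j (by omega) (by omega) (by omega))

theorem firstFaceFits_of_adjacent {σ : Perm (Fin (n + 1))} (hμ : μ 0 = MV.M)
    (h : faceVal σ 0 = faceVal σ 1 + 1) : FirstFaceFits n μ (faceVal σ) := by
  refine ⟨fun _ => by simp [CreaseRel, hμ, h], fun j _ _ => ?_⟩
  simp only [NoncrossingAt, StrictlyBetween, zero_add]
  omega

theorem firstFaceFits_of_enclosing {σ : Perm (Fin (n + 1))} (hμ : μ 0 = MV.M)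
    (h0 : faceVal σ 0 = n) (h1 : faceVal σ 1 = 0) : FirstFaceFits n μ (faceVal σ) := by
  refine ⟨fun hn => by simp [CreaseRel, hμ, h0, h1, hn], fun j hj hj2 => ?_⟩
  obtain rfl | hj0 := Nat.eq_zero_or_pos j
  · simp only [NoncrossingAt, StrictlyBetween, zero_add]
    omega
  have h0j := faceVal_ne σ n.succ_pos (j := j) (by omega) (by omega)
  have h1j := faceVal_ne σ (i := 1) (j := j) (by omega) (by omega) (by omega)
  have h0j' := faceVal_ne σ n.succ_pos (j := j + 1) (by omega) (by omega)
  have h1j' := faceVal_ne σ (i := 1) (j := j + 1) (by omega) (by omega) (by omega)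
  have hj_lt := faceVal_lt σ (i := j) (by omega)
  have hj_lt' := faceVal_lt σ (i := j + 1) (by omega)
  simp only [NoncrossingAt, StrictlyBetween, zero_add]
  omega

end FirstFace

section InsertFirst

variable {n : ℕ} {μ : ℕ → MV}

/-- The stack `τ` turned over, with a new first face inserted at layer `p`. Turning it over
compensates for the shift of indices, which exchanges the parities in condition (1). -/
def insertFirst (p : Fin (n + 1)) (τ : Perm (Fin n)) : Perm (Fin (n + 1)) :=
  (finSuccEquiv n).trans ((τ.trans Fin.revPerm).optionCongr.trans (finSuccEquiv' p).symm)

theorem insertFirst_zero (p : Fin (n + 1)) (τ : Perm (Fin n)) : insertFirst p τ 0 = p := by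
  simp [insertFirst]

theorem insertFirst_succ (p : Fin (n + 1)) (τ : Perm (Fin n)) (i : Fin n) :
    insertFirst p τ i.succ = p.succAbove (τ i).rev := by
  simp [insertFirst]

theorem insertFirst_injective2 : Function.Injective2 (insertFirst (n := n)) := by
  intro p q τ ρ h
  obtain rfl : p = q := by rw [← insertFirst_zero p τ, h, insertFirst_zero]
  refine ⟨rfl, Equiv.ext fun i => Fin.rev_injective (p.succAbove_right_injective ?_)⟩
  rw [← insertFirst_succ, h, insertFirst_succ]

theorem exists_insertFirst_eq (σ : Perm (Fin (n + 1))) : ∃ p τ, insertFirst p τ = σ := by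
  have card_eq : Fintype.card (Fin (n + 1) × Perm (Fin n)) = Fintype.card (Perm (Fin (n + 1))) := by
    simp [Fintype.card_perm, Nat.factorial_succ]
  obtain ⟨⟨p, τ⟩, h⟩ := ((Fintype.bijective_iff_injective_and_card _).2
    ⟨insertFirst_injective2.uncurry, card_eq⟩).surjective σ
  exact ⟨p, τ, h⟩

theorem faceVal_insertFirst_zero (p : Fin (n + 1)) (τ : Perm (Fin n)) :
    faceVal (insertFirst p τ) 0 = p := by
  rw [faceVal_of_lt _ n.succ_pos]
  exact congrArg Fin.val (insertFirst_zero p τ)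

theorem faceVal_insertFirst_succ_lt_iff (p : Fin (n + 1)) (τ : Perm (Fin n)) :
    ∀ i < n, ∀ j < n, faceVal (insertFirst p τ) (i + 1) < faceVal (insertFirst p τ) (j + 1) ↔
      faceVal τ j < faceVal τ i := by
  intro i hi j hj
  have succ_eq (k : ℕ) (hk : k < n) :
      faceVal (insertFirst p τ) (k + 1) = p.succAbove (τ ⟨k, hk⟩).rev := by
    rw [faceVal_of_lt _ (Nat.succ_lt_succ hk), ← insertFirst_succ]
    rfl
  rw [succ_eq i hi, succ_eq j hj, faceVal_of_lt τ hi, faceVal_of_lt τ hj, Fin.val_fin_lt,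
    Fin.val_fin_lt, Fin.succAbove_lt_succAbove_iff, Fin.rev_lt_rev]

/-- The layer to which the face of layer `v` moves when a stack of `n` faces is turned over and a
face is inserted at layer `p`. -/
def flipInsert (n p v : ℕ) : ℕ := if n - (v + 1) < p then n - (v + 1) else n - (v + 1) + 1

theorem val_succAbove_rev (p : Fin (n + 1)) (v : Fin n) :
    (p.succAbove v.rev : ℕ) = flipInsert n p v := by
  simp only [Fin.succAbove, flipInsert, Fin.lt_def, Fin.val_castSucc, Fin.val_rev]
  split_ifs <;> simp

theorem faceVal_insertFirst_one (p : Fin (n + 1)) (τ : Perm (Fin n)) (hn : 0 < n) :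
    faceVal (insertFirst p τ) 1 = flipInsert n p (faceVal τ 0) := by
  rw [faceVal_of_lt _ (Nat.succ_lt_succ hn), faceVal_of_lt τ hn, ← val_succAbove_rev,
    ← insertFirst_succ]
  rfl

/-- The layer just above the old first face of `τ`, once `τ` has been turned over. -/
def layerAbove (τ : Perm (Fin n)) : Fin (n + 1) := ⟨n - faceVal τ 0, by omega⟩

theorem eq_layerAbove_iff {p : Fin (n + 1)} {τ : Perm (Fin n)} (hn : 0 < n) :
    p = layerAbove τ ↔
      faceVal (insertFirst p τ) 0 = faceVal (insertFirst p τ) 1 + 1 := by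
  have hτ := faceVal_lt τ hn
  rw [faceVal_insertFirst_zero, faceVal_insertFirst_one p τ hn, Fin.ext_iff, flipInsert]
  simp only [layerAbove]
  split_ifs <;> omega

theorem validLayerOrdering_insertFirst_iff {p : Fin (n + 1)} {τ : Perm (Fin n)} :
    ValidLayerOrdering (n + 1) μ (insertFirst p τ) ↔
      FirstFaceFits n μ (faceVal (insertFirst p τ)) ∧
        ValidLayerOrdering n (fun i => μ (i + 1)) τ :=
  validLayerOrdering_succ_iff (faceVal_insertFirst_succ_lt_iff p τ)

end InsertFirst

section Spiral

variable {n a : ℕ}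

/-- The assignment `M^a V^b`, for any `b`. -/
def mountainsThenValleys (a : ℕ) : ℕ → MV := fun i => if i < a then MV.M else MV.V

theorem mountainsThenValleys_of_lt {i : ℕ} (hi : i < a) : mountainsThenValleys a i = MV.M :=
  if_pos hi

theorem mountainsThenValleys_succ :
    (fun i => mountainsThenValleys (a + 1) (i + 1)) = mountainsThenValleys a := by
  funext i
  simp [mountainsThenValleys]

variable {σ : Perm (Fin n)}

theorem ValidLayerOrdering.succ_lt_of_even (h : ValidLayerOrdering n (mountainsThenValleys a) σ)
    {i : ℕ} (hi : Even i) (hia : i < a) (hin : i + 1 < n) : faceVal σ (i + 1) < faceVal σ i := by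
  simpa [mountainsThenValleys_of_lt hia, hi] using h.1 i hin

theorem ValidLayerOrdering.lt_succ_of_odd (h : ValidLayerOrdering n (mountainsThenValleys a) σ)
    {i : ℕ} (hi : Odd i) (hia : i < a) (hin : i + 1 < n) : faceVal σ i < faceVal σ (i + 1) := by
  simpa [mountainsThenValleys_of_lt hia, Nat.not_even_iff_odd.2 hi] using h.1 i hin

theorem ValidLayerOrdering.one_lt_zero (h : ValidLayerOrdering n (mountainsThenValleys a) σ)
    (ha : 0 < a) (hn : 1 < n) : faceVal σ 1 < faceVal σ 0 :=
  h.succ_lt_of_even Even.zero ha hn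

theorem ValidLayerOrdering.one_lt_two (h : ValidLayerOrdering n (mountainsThenValleys a) σ)
    (ha : 1 < a) (hn : 2 < n) : faceVal σ 1 < faceVal σ 2 :=
  h.lt_succ_of_odd odd_one ha hn

/-- The face `x` lies inside the first crease, whose upper face is the first one. -/
def InFirstCrease (σ : Perm (Fin n)) (x : ℕ) : Prop :=
  faceVal σ 1 < faceVal σ x ∧ faceVal σ x < faceVal σ 0

theorem ValidLayerOrdering.inFirstCrease_succ_iff
    (h : ValidLayerOrdering n (mountainsThenValleys a) σ) (ha : 0 < a) {j : ℕ} (hj : j % 2 = 0)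
    (hjn : j + 1 < n) : InFirstCrease σ (j + 1) ↔ InFirstCrease σ j := by
  have h10 := h.one_lt_zero ha (by omega)
  have hnc := (validLayerOrdering_iff.1 h).2 0 j (by omega) hjn hj.symm
  simpa [NoncrossingAt, StrictlyBetween, h10.le, InFirstCrease, iff_comm] using hnc

theorem ValidLayerOrdering.exists_tail {σ : Perm (Fin (n + 1))}
    (h : ValidLayerOrdering (n + 1) (mountainsThenValleys (a + 1)) σ) :
    ∃ τ : Perm (Fin n), ValidLayerOrdering n (mountainsThenValleys a) τ ∧
      ∀ i < n, ∀ j < n, faceVal σ (i + 1) < faceVal σ (j + 1) ↔ faceVal τ j < faceVal τ i := by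
  obtain ⟨p, τ, rfl⟩ := exists_insertFirst_eq σ
  refine ⟨τ, ?_, faceVal_insertFirst_succ_lt_iff p τ⟩
  rw [← mountainsThenValleys_succ]
  exact (validLayerOrdering_insertFirst_iff.1 h).2

theorem ValidLayerOrdering.inFirstCrease_of_two_lt_zero
    (h : ValidLayerOrdering n (mountainsThenValleys a) σ) (han : a < n)
    (h20 : faceVal σ 2 < faceVal σ 0) {x : ℕ} (hx : 2 ≤ x) (hxn : x < n) (hxa : x < 2 * a) :
    InFirstCrease σ x := by
  have ha : 2 ≤ a := by omega
  induction a, ha using Nat.le_induction generalizing n x with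
  | base =>
    have h2 : InFirstCrease σ 2 := ⟨h.one_lt_two (by omega) (by omega), h20⟩
    obtain rfl | rfl : x = 2 ∨ x = 3 := by omega
    · exact h2
    · exact (h.inFirstCrease_succ_iff (by omega) rfl hxn).2 h2
  | succ a ha ih =>
    obtain ⟨n, rfl⟩ : ∃ k, n = k + 1 := ⟨n - 1, by omega⟩
    have h2 : InFirstCrease σ 2 := ⟨h.one_lt_two (by omega) (by omega), h20⟩
    have h3 : InFirstCrease σ 3 := (h.inFirstCrease_succ_iff (by omega) rfl (by omega)).2 h2
    obtain ⟨τ, hτ, lt_iff⟩ := h.exists_tail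
    have hτ20 : faceVal τ 2 < faceVal τ 0 := (lt_iff 0 (by omega) 2 (by omega)).1 h3.1
    have below (y : ℕ) (hy : 2 ≤ y) (hyn : y < n + 1) (hya : y ≤ 2 * a) : InFirstCrease σ y := by
      obtain rfl | ⟨z, hz, rfl⟩ : y = 2 ∨ ∃ z, 2 ≤ z ∧ y = z + 1 := by
        by_cases hy2 : y = 2
        exacts [.inl hy2, .inr ⟨y - 1, by omega, by omega⟩]
      · exact h2
      · obtain ⟨hz1, hz0⟩ := ih hτ (by omega) hτ20 hz (by omega) (by omega)
        exact ⟨(lt_iff 0 (by omega) z (by omega)).2 hz0,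
          ((lt_iff z (by omega) 1 (by omega)).2 hz1).trans h20⟩
    obtain hx' | rfl : x ≤ 2 * a ∨ x = 2 * a + 1 := by omega
    · exact below x hx hxn hx'
    · exact (h.inFirstCrease_succ_iff (by omega) (by omega) hxn).2
        (below _ (by omega) (by omega) le_rfl)

theorem ValidLayerOrdering.lt_two_of_two_lt_zero
    (h : ValidLayerOrdering n (mountainsThenValleys a) σ) (han : a < n)
    (h20 : faceVal σ 2 < faceVal σ 0) {x : ℕ} (hx : 3 ≤ x) (hxn : x < n) (hxa : x + 1 < 2 * a) :
    faceVal σ x < faceVal σ 2 := by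
  obtain ⟨a, rfl⟩ : ∃ k, a = k + 1 := ⟨a - 1, by omega⟩
  obtain ⟨n, rfl⟩ : ∃ k, n = k + 1 := ⟨n - 1, by omega⟩
  obtain ⟨x, rfl⟩ : ∃ k, x = k + 1 := ⟨x - 1, by omega⟩
  have h3 : InFirstCrease σ 3 :=
    h.inFirstCrease_of_two_lt_zero han h20 (by omega) (by omega) (by omega)
  obtain ⟨τ, hτ, lt_iff⟩ := h.exists_tail
  have hτ20 : faceVal τ 2 < faceVal τ 0 := (lt_iff 0 (by omega) 2 (by omega)).1 h3.1
  have hx' : InFirstCrease τ x :=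
    hτ.inFirstCrease_of_two_lt_zero (by omega) hτ20 (by omega) (by omega) (by omega)
  exact (lt_iff x (by omega) 1 (by omega)).2 hx'.1

theorem ValidLayerOrdering.three_lt_of_one_lt_three
    (h : ValidLayerOrdering n (mountainsThenValleys a) σ) (han : a < n)
    (h13 : faceVal σ 1 < faceVal σ 3) {x : ℕ} (hx : 4 ≤ x) (hxn : x < n) (hxa : x + 2 < 2 * a) :
    faceVal σ 3 < faceVal σ x := by
  obtain ⟨a, rfl⟩ : ∃ k, a = k + 1 := ⟨a - 1, by omega⟩
  obtain ⟨n, rfl⟩ : ∃ k, n = k + 1 := ⟨n - 1, by omega⟩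
  obtain ⟨x, rfl⟩ : ∃ k, x = k + 1 := ⟨x - 1, by omega⟩
  obtain ⟨τ, hτ, lt_iff⟩ := h.exists_tail
  have hτ20 : faceVal τ 2 < faceVal τ 0 := (lt_iff 0 (by omega) 2 (by omega)).1 h13
  have hx' : faceVal τ x < faceVal τ 2 :=
    hτ.lt_two_of_two_lt_zero (by omega) hτ20 (by omega) (by omega) (by omega)
  exact (lt_iff 2 (by omega) x (by omega)).2 hx'

theorem ValidLayerOrdering.not_inFirstCrease_of_zero_lt_two
    (h : ValidLayerOrdering n (mountainsThenValleys a) σ) (han : a < n)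
    (h02 : faceVal σ 0 < faceVal σ 2) {x : ℕ} (hx : 2 ≤ x) (hxn : x < n) (hxa : x + 2 < 2 * a) :
    ¬ InFirstCrease σ x := by
  induction a generalizing n x with
  | zero => omega
  | succ a ih =>
    have h2 : ¬ InFirstCrease σ 2 := fun hin => hin.2.not_gt h02
    have h3 : ¬ InFirstCrease σ 3 := (h.inFirstCrease_succ_iff (by omega) rfl (by omega)).not.2 h2
    obtain rfl | rfl | hx4 : x = 2 ∨ x = 3 ∨ 4 ≤ x := by omega
    · exact h2
    · exact h3
    obtain h13 | h31 := Nat.lt_or_ge (faceVal σ 1) (faceVal σ 3)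
    · have h03 : faceVal σ 0 ≤ faceVal σ 3 := not_lt.1 fun h30 => h3 ⟨h13, h30⟩
      have h3x : faceVal σ 3 < faceVal σ x := h.three_lt_of_one_lt_three han h13 hx4 hxn hxa
      exact fun hin => (h03.trans_lt h3x).not_gt hin.2
    obtain ⟨n, rfl⟩ : ∃ k, n = k + 1 := ⟨n - 1, by omega⟩
    obtain ⟨τ, hτ, lt_iff⟩ := h.exists_tail
    have h31 : faceVal σ 3 < faceVal σ 1 :=
      h31.lt_of_ne (faceVal_ne σ (by omega) (by omega) (by omega))
    have hτ02 : faceVal τ 0 < faceVal τ 2 := (lt_iff 2 (by omega) 0 (by omega)).1 h31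
    have below (y : ℕ) (hy : 2 ≤ y) (hyn : y < n) (hya : y + 2 < 2 * a) :
        ¬ InFirstCrease σ (y + 1) := fun ⟨h1, h0⟩ =>
      ih hτ (by omega) hτ02 hy hyn hya
        ⟨(lt_iff y hyn 1 (by omega)).1 (h0.trans h02), (lt_iff 0 (by omega) y hyn).1 h1⟩
    obtain ⟨y, rfl⟩ : ∃ y, x = y + 2 := ⟨x - 2, by omega⟩
    obtain hya | hya : y + 3 < 2 * a ∨ y + 3 = 2 * a := by omega
    · exact below (y + 1) (by omega) (by omega) hya
    · rw [h.inFirstCrease_succ_iff (by omega) (by omega) hxn]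
      exact below y (by omega) (by omega) (by omega)

end Spiral

section Recursion

variable {n a : ℕ} {μ : ℕ → MV}

/-- The valid layer orderings for `μ`. -/
def foldings (n : ℕ) (μ : ℕ → MV) : Set (Perm (Fin n)) := {σ | ValidLayerOrdering n μ σ}

/-- The valid layer orderings whose spiral turns inwards at face 2. -/
def inwardFoldings (n : ℕ) (μ : ℕ → MV) : Set (Perm (Fin n)) :=
  {σ ∈ foldings n μ | faceVal σ 2 < faceVal σ 0}

theorem foldCount_eq_ncard : foldCount n μ = (foldings n μ).ncard :=
  Nat.card_coe_set_eq (foldings n μ)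

theorem inwardFoldings_subset : inwardFoldings n μ ⊆ foldings n μ := Set.sep_subset _ _

theorem insertFirst_mem_foldings_iff {p : Fin (n + 1)} {τ : Perm (Fin n)} :
    insertFirst p τ ∈ foldings (n + 1) (mountainsThenValleys (a + 1)) ↔
      FirstFaceFits n (mountainsThenValleys (a + 1)) (faceVal (insertFirst p τ)) ∧
        τ ∈ foldings n (mountainsThenValleys a) := by
  rw [← mountainsThenValleys_succ (a := a)]
  exact validLayerOrdering_insertFirst_iff

theorem faceVal_zero_add_one_of_mem_inwardFoldings {σ : Perm (Fin n)} (han : a < n)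
    (hna : n ≤ 2 * a) (hσ : σ ∈ inwardFoldings n (mountainsThenValleys a)) :
    faceVal σ 0 + 1 = n := by
  obtain ⟨hσ, h20⟩ := hσ
  refine faceVal_zero_add_one_of_forall_le (by omega) fun i hi => ?_
  rcases i with _ | _ | i
  · exact le_rfl
  · exact (ValidLayerOrdering.one_lt_zero hσ (by omega) hi).le
  · exact (ValidLayerOrdering.inFirstCrease_of_two_lt_zero hσ han h20 (by omega) hi
      (by omega)).2.le

theorem faceVal_zero_of_mem_foldings_sdiff {σ : Perm (Fin n)} (han : a < n) (hna : n + 1 < 2 * a)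
    (hσ : σ ∈ foldings n (mountainsThenValleys a) \ inwardFoldings n (mountainsThenValleys a)) :
    faceVal σ 0 = faceVal σ 1 + 1 := by
  obtain ⟨hσ, hout⟩ := hσ
  have h10 := ValidLayerOrdering.one_lt_zero hσ (by omega) (by omega)
  have h02 : faceVal σ 0 < faceVal σ 2 :=
    (not_lt.1 fun h20 => hout ⟨hσ, h20⟩).lt_of_ne (faceVal_ne σ (by omega) (by omega) (by omega))
  have h0 := faceVal_lt σ (i := 0) (by omega)
  obtain ⟨i, hi, hiv⟩ := exists_faceVal_eq σ (v := faceVal σ 1 + 1) (by omega)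
  rcases i with _ | _ | i
  · exact hiv
  · exact absurd hiv (Nat.lt_succ_self _).ne
  · have hnot := ValidLayerOrdering.not_inFirstCrease_of_zero_lt_two hσ han h02
      (x := i + 2) (by omega) hi (by omega)
    rw [InFirstCrease, hiv] at hnot
    omega

theorem inwardFoldings_succ (han : a < n) (hna : n < 2 * a) :
    inwardFoldings (n + 1) (mountainsThenValleys (a + 1)) =
      insertFirst (Fin.last n) '' inwardFoldings n (mountainsThenValleys a) := by
  ext σ
  obtain ⟨p, τ, rfl⟩ := exists_insertFirst_eq σ
  have lt_iff := faceVal_insertFirst_succ_lt_iff p τ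
  constructor
  · intro hσ
    have hp := faceVal_zero_add_one_of_mem_inwardFoldings (by omega) (by omega) hσ
    have hin3 := ValidLayerOrdering.inFirstCrease_of_two_lt_zero hσ.1 (by omega) hσ.2 (x := 3)
      (by omega) (by omega) (by omega)
    rw [faceVal_insertFirst_zero] at hp
    obtain rfl : p = Fin.last n := Fin.ext (Nat.succ_injective hp)
    exact ⟨τ, ⟨(insertFirst_mem_foldings_iff.1 hσ.1).2,
      (lt_iff 0 (by omega) 2 (by omega)).1 hin3.1⟩, rfl⟩
  · rintro ⟨ρ, hρ, h⟩
    obtain ⟨rfl, rfl⟩ := insertFirst_injective2 h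
    have hn : 0 < n := by omega
    have h0 : faceVal (insertFirst (Fin.last n) ρ) 0 = n := faceVal_insertFirst_zero _ ρ
    have h1 : faceVal (insertFirst (Fin.last n) ρ) 1 = 0 := by
      rw [faceVal_insertFirst_one _ _ hn, flipInsert,
        faceVal_zero_add_one_of_mem_inwardFoldings han hna.le hρ]
      simp [hn]
    have h2_lt := faceVal_lt (insertFirst (Fin.last n) ρ) (i := 2) (by omega)
    have h2_ne := faceVal_ne (insertFirst (Fin.last n) ρ) (i := 2) (j := 0)
      (by omega) (by omega) (by omega)
    exact ⟨insertFirst_mem_foldings_iff.2 ⟨firstFaceFits_of_enclosing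
      (mountainsThenValleys_of_lt a.succ_pos) h0 h1, hρ.1⟩, by omega⟩

theorem foldings_sdiff_inwardFoldings_succ (han : a < n) (hna : n < 2 * a) :
    foldings (n + 1) (mountainsThenValleys (a + 1)) \
        inwardFoldings (n + 1) (mountainsThenValleys (a + 1)) =
      (fun τ => insertFirst (layerAbove τ) τ) '' foldings n (mountainsThenValleys a) := by
  ext σ
  obtain ⟨p, τ, rfl⟩ := exists_insertFirst_eq σ
  constructor
  · intro hσ
    have hp := faceVal_zero_of_mem_foldings_sdiff (by omega) (by omega) hσ
    obtain rfl := (eq_layerAbove_iff (by omega)).2 hp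
    exact ⟨τ, (insertFirst_mem_foldings_iff.1 hσ.1).2, rfl⟩
  · rintro ⟨ρ, hρ, h⟩
    obtain ⟨rfl, rfl⟩ := insertFirst_injective2 h
    have h01 := (eq_layerAbove_iff (by omega)).1 (rfl : layerAbove ρ = layerAbove ρ)
    have hmem := insertFirst_mem_foldings_iff.2
      ⟨firstFaceFits_of_adjacent (mountainsThenValleys_of_lt a.succ_pos) h01, hρ⟩
    have h12 := ValidLayerOrdering.one_lt_two hmem (by omega) (by omega)
    exact ⟨hmem, fun hin => by have := hin.2; omega⟩

theorem ncard_inwardFoldings_succ (han : a < n) (hna : n < 2 * a) :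
    (inwardFoldings (n + 1) (mountainsThenValleys (a + 1))).ncard =
      (inwardFoldings n (mountainsThenValleys a)).ncard := by
  rw [inwardFoldings_succ han hna]
  exact Set.ncard_image_of_injective _ (insertFirst_injective2.right _)

theorem foldCount_mountainsThenValleys_succ (han : a < n) (hna : n < 2 * a) :
    foldCount (n + 1) (mountainsThenValleys (a + 1)) =
      foldCount n (mountainsThenValleys a) +
        (inwardFoldings n (mountainsThenValleys a)).ncard := by
  have hinj : Function.Injective fun τ : Perm (Fin n) => insertFirst (layerAbove τ) τ :=
    fun _ _ h => (insertFirst_injective2 h).2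
  rw [foldCount_eq_ncard, ← Set.ncard_sdiff_add_ncard_of_subset inwardFoldings_subset,
    foldings_sdiff_inwardFoldings_succ han hna, Set.ncard_image_of_injective _ hinj,
    ncard_inwardFoldings_succ han hna, foldCount_eq_ncard]

theorem ncard_inwardFoldings_add (han : a < n) (hna : n < 2 * a) (m : ℕ) :
    (inwardFoldings (n + m) (mountainsThenValleys (a + m))).ncard =
      (inwardFoldings n (mountainsThenValleys a)).ncard := by
  induction m with
  | zero => rfl
  | succ m ih =>
    rw [← add_assoc, ← add_assoc, ncard_inwardFoldings_succ (by omega) (by omega), ih]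

theorem foldCount_mountainsThenValleys_add (han : a < n) (hna : n < 2 * a) (m : ℕ) :
    foldCount (n + m) (mountainsThenValleys (a + m)) =
      foldCount n (mountainsThenValleys a) +
        m * (inwardFoldings n (mountainsThenValleys a)).ncard := by
  induction m with
  | zero => simp
  | succ m ih =>
    rw [← add_assoc, ← add_assoc, foldCount_mountainsThenValleys_succ (by omega) (by omega), ih,
      ncard_inwardFoldings_add han hna]
    ring

end Recursion

section Enumeration

variable {n : ℕ} {μ : ℕ → MV}

/-- The list of layers `σ(0), …, σ(n-1)`. -/
def layers (σ : Perm (Fin n)) : List ℕ := List.ofFn fun i => (σ i : ℕ)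

theorem layers_injective : Function.Injective (layers (n := n)) := fun _ _ h =>
  Equiv.ext fun i => Fin.ext (congrFun (List.ofFn_injective h) i)

theorem getD_layers (σ : Perm (Fin n)) (i : ℕ) : (layers σ).getD i 0 = faceVal σ i := by
  by_cases hi : i < n <;> simp [layers, faceVal, hi]

theorem layers_insertFirst (p : Fin (n + 1)) (τ : Perm (Fin n)) :
    layers (insertFirst p τ) = (p : ℕ) :: (layers τ).map (flipInsert n p) := by
  simp only [layers, List.ofFn_succ, insertFirst_zero, insertFirst_succ, val_succAbove_rev,
    List.map_ofFn, Function.comp_def]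

instance (f : ℕ → ℕ) (i : ℕ) : Decidable (CreaseRel μ f i) :=
  inferInstanceAs (Decidable (ite _ _ _))

instance (x a b : ℕ) : Decidable (StrictlyBetween x a b) := inferInstanceAs (Decidable (_ ∧ _))

instance (f : ℕ → ℕ) (i j : ℕ) : Decidable (NoncrossingAt f i j) :=
  inferInstanceAs (Decidable (_ ↔ _))

instance (f : ℕ → ℕ) : Decidable (FirstFaceFits n μ f) := inferInstanceAs (Decidable (_ ∧ _))

/-- The lists of layers of the foldings for `μ`, found by adding one first face at a time. Lists
serve because the kernel evaluates them quickly, unlike permutations. -/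
def layerLists : ℕ → (ℕ → MV) → Finset (List ℕ)
  | 0, _ => {[]}
  | n + 1, μ =>
    ((layerLists n (fun i => μ (i + 1)) ×ˢ Finset.range (n + 1)).image fun q =>
      q.2 :: q.1.map (flipInsert n q.2)).filter fun l => FirstFaceFits n μ (l.getD · 0)

theorem coe_layerLists (n : ℕ) (μ : ℕ → MV) : (layerLists n μ : Set (List ℕ)) =
    layers '' foldings n μ := by
  induction n generalizing μ with
  | zero =>
    have hall : foldings 0 μ = Set.univ := Set.eq_univ_of_forall fun σ =>
      ⟨fun i hi => absurd hi (Nat.not_lt_zero _), fun i j hi => absurd hi (Nat.not_lt_zero _)⟩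
    simp [layerLists, hall, layers, Set.range_unique]
  | succ n ih =>
    ext l
    have ih_mem (t : List ℕ) : t ∈ layerLists n (fun i => μ (i + 1)) ↔
        ∃ τ ∈ foldings n (fun i => μ (i + 1)), layers τ = t := by
      rw [← Finset.mem_coe, ih, Set.mem_image]
    simp only [layerLists, Finset.coe_filter, Finset.mem_image, Finset.mem_product, ih_mem,
      Finset.mem_range, Prod.exists, Set.mem_ofPred_eq, Set.mem_image]
    constructor
    · rintro ⟨⟨_, p, ⟨⟨τ, hτ, rfl⟩, hp⟩, rfl⟩, hfits⟩
      have hl := layers_insertFirst ⟨p, hp⟩ τ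
      simp only [← hl, getD_layers] at hfits
      exact ⟨_, validLayerOrdering_insertFirst_iff.2 ⟨hfits, hτ⟩, hl⟩
    · rintro ⟨σ, hσ, rfl⟩
      obtain ⟨p, τ, rfl⟩ := exists_insertFirst_eq σ
      obtain ⟨hfits, hτ⟩ := validLayerOrdering_insertFirst_iff.1 hσ
      refine ⟨⟨_, p, ⟨⟨τ, hτ, rfl⟩, p.isLt⟩, (layers_insertFirst p τ).symm⟩, ?_⟩
      simpa only [getD_layers] using hfits

theorem foldCount_eq_card_layerLists : foldCount n μ = (layerLists n μ).card := by
  rw [foldCount_eq_ncard, ← Set.ncard_image_of_injective _ layers_injective, ← coe_layerLists,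
    Set.ncard_coe_finset]

theorem ncard_inwardFoldings_eq_card_filter : (inwardFoldings n μ).ncard =
    ((layerLists n μ).filter fun l => l.getD 2 0 < l.getD 0 0).card := by
  have himage : layers '' inwardFoldings n μ =
      ((layerLists n μ).filter fun l => l.getD 2 0 < l.getD 0 0 : Finset (List ℕ)) := by
    ext l
    simp only [Finset.coe_filter, ← Finset.mem_coe, coe_layerLists, Set.mem_image,
      Set.mem_ofPred_eq, inwardFoldings]
    constructor
    · rintro ⟨σ, ⟨hσ, h20⟩, rfl⟩
      exact ⟨⟨σ, hσ, rfl⟩, by simpa only [getD_layers] using h20⟩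
    · rintro ⟨⟨σ, hσ, rfl⟩, h20⟩
      exact ⟨σ, ⟨hσ, by simpa only [getD_layers] using h20⟩, rfl⟩
  rw [← Set.ncard_image_of_injective _ layers_injective, himage, Set.ncard_coe_finset]

theorem foldCount_seven_four : foldCount 7 (mountainsThenValleys 4) = 11 := by
  rw [foldCount_eq_card_layerLists]
  decide +kernel

theorem ncard_inwardFoldings_seven_four :
    (inwardFoldings 7 (mountainsThenValleys 4)).ncard = 2 := by
  rw [ncard_inwardFoldings_eq_card_filter]
  decide +kernel

theorem foldCount_nine_five : foldCount 9 (mountainsThenValleys 5) = 22 := by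
  rw [foldCount_eq_card_layerLists]
  decide +kernel

theorem ncard_inwardFoldings_nine_five :
    (inwardFoldings 9 (mountainsThenValleys 5)).ncard = 3 := by
  rw [ncard_inwardFoldings_eq_card_filter]
  decide +kernel

end Enumeration

/-- Theorem: for `a > b + 1` and `b ∈ {2, 3}`, the assignment `M^a V^b` on the
`1 × (a+b+1)` strip folds in `ab + b² − b + 1` ways. -/
theorem stmt2 (a b : ℕ) (hab : b + 1 < a) (hb : b = 2 ∨ b = 3) :
    foldCount (a + b + 1) (fun i => if i < a then MV.M else MV.V) =
      a * b + b ^ 2 - b + 1 := by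
  change foldCount (a + b + 1) (mountainsThenValleys a) = _
  obtain ⟨m, rfl⟩ := Nat.exists_eq_add_of_le hab
  obtain rfl | rfl := hb
  · calc
      foldCount (4 + m + 2 + 1) (mountainsThenValleys (4 + m))
      _ = foldCount (7 + m) (mountainsThenValleys (4 + m)) := by congr 1; ring
      _ = 11 + m * 2 := by
        rw [foldCount_mountainsThenValleys_add (by norm_num) (by norm_num), foldCount_seven_four,
          ncard_inwardFoldings_seven_four]
      _ = (4 + m) * 2 + 2 ^ 2 - 2 + 1 := by omega
  · calc
      foldCount (5 + m + 3 + 1) (mountainsThenValleys (5 + m))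
      _ = foldCount (9 + m) (mountainsThenValleys (5 + m)) := by congr 1; ring
      _ = 22 + m * 3 := by
        rw [foldCount_mountainsThenValleys_add (by norm_num) (by norm_num), foldCount_nine_five,
          ncard_inwardFoldings_nine_five]
      _ = (5 + m) * 3 + 3 ^ 2 - 3 + 1 := by omega
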